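/- arXiv:cs/0612120 — 6 statements merged into one kernel-verified Lean document; each statement's English description precedes it below -/
import Mathlib

section
/- Let Σ be a set, 𝒜 a complete lattice satisfying the descending chain condition (every strictly decreasing sequence in 𝒜 is finite), together with a Galois insertion (α, γ) of 𝒜 into the dual lattice of Moore families on Σ. Let F be a set of finitary operations on ℘(Σ). Assume that one of the following holds: (i) for every Moore family ℳ on Σ, α(M(F(ℳ))) = α(M(F(γ(α(ℳ))))); or (ii) for every a ∈ 𝒜, the forward F-complete shell S_F(γ(a)) lies in the image of γ. Then every sequence a₀ = a, a_{i+1} = refine_{f_i}^𝒜(S⃗_i, a_i) with f_i ∈ F and S⃗_i ∈ Refiners_{f_i}^𝒜(a_i) is finite, and whenever such a sequence ends at an element a_n with Refiners_F^𝒜(a_n) = ∅, then a_n = α(S_F(γ(a))). -/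
universe u v

variable {X : Type u} {A : Type v}

/-- A Moore family: a collection of subsets closed under arbitrary intersections. -/
def IsMoore (M : Set (Set X)) : Prop := ∀ S ⊆ M, ⋂₀ S ∈ M

/-- The least Moore family containing `C`. -/
def mClose (C : Set (Set X)) : Set (Set X) := ⋂₀ {M | IsMoore M ∧ C ⊆ M}

/-- A disjunctive Moore family: additionally closed under arbitrary unions. -/
def IsDisjMoore (M : Set (Set X)) : Prop := IsMoore M ∧ ∀ S ⊆ M, ⋃₀ S ∈ M

/-- The least disjunctive Moore family containing `C`. -/
def dClose (C : Set (Set X)) : Set (Set X) := ⋂₀ {M | IsDisjMoore M ∧ C ⊆ M}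

/-- The closure operator associated with a Moore family. -/
def mu (M : Set (Set X)) (S : Set X) : Set X := ⋂₀ {T | T ∈ M ∧ S ⊆ T}

/-- The partition (as a setoid) induced by a Moore family:
`s ≡ s'` iff `μ {s} = μ {s'}`. -/
def prS (M : Set (Set X)) : Setoid X :=
  ⟨fun s t => mu M {s} = mu M {t}, ⟨fun _ => rfl, Eq.symm, Eq.trans⟩⟩

/-- The Moore family of all `P`-saturated sets (unions of blocks of `P`). -/
def padS (P : Setoid X) : Set (Set X) := {S | ∀ s ∈ S, ∀ t, P.r s t → t ∈ S}

/-- `P` refines `Q`: every block of `P` is contained in a block of `Q`. -/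
def refines (P Q : Setoid X) : Prop := ∀ s t, P.r s t → Q.r s t

/-- A finitary operation on `℘(X)`: an arity `n` together with a map `℘(X)^n → ℘(X)`. -/
abbrev Op (X : Type u) := (n : ℕ) × ((Fin n → Set X) → Set X)

/-- The image `F(S)` of a set of operations on a collection of subsets. -/
def imageF (F : Set (Op X)) (S : Set (Set X)) : Set (Set X) :=
  {T | ∃ f ∈ F, ∃ args : Fin f.1 → Set X, (∀ i, args i ∈ S) ∧ T = f.2 args}

/-- Forward `F`-completeness: `F(S) ⊆ S`. -/
def FComplete (F : Set (Op X)) (S : Set (Set X)) : Prop := imageF F S ⊆ S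

/-- The forward `F`-complete shell: the least forward `F`-complete Moore family
containing `M`. -/
def shellF (F : Set (Op X)) (M : Set (Set X)) : Set (Set X) :=
  ⋂₀ {B | IsMoore B ∧ FComplete F B ∧ M ⊆ B}

/-- Predecessor operator of a transition relation. -/
def preR (r : X → X → Prop) (S : Set X) : Set X := {s | ∃ t ∈ S, r s t}

/-- The split of a partition `P` by a set `T`: blocks are the nonempty sets
among `B ∩ T` and `B \ T` for blocks `B` of `P`. -/
def splitS (T : Set X) (P : Setoid X) : Setoid X :=
  ⟨fun s t => P.r s t ∧ (s ∈ T ↔ t ∈ T),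
   ⟨fun s => ⟨P.iseqv.refl s, Iff.rfl⟩,
    fun h => ⟨P.iseqv.symm h.1, h.2.symm⟩,
    fun h1 h2 => ⟨P.iseqv.trans h1.1 h2.1, h1.2.trans h2.2⟩⟩⟩

/-- Abstract refinement: `refine_f^A(S, a) = α(M(γ(a) ∪ {f(S)}))`. -/
def refineA [Preorder A] (al : Set (Set X) → A) (ga : A → Set (Set X))
    (f : Op X) (S : Fin f.1 → Set X) (a : A) : A :=
  al (mClose (ga a ∪ {f.2 S}))

/-- Abstract refiners: tuples in `γ(a)^n` whose refinement is strictly below `a`. -/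
def refinersA [Preorder A] (al : Set (Set X) → A) (ga : A → Set (Set X))
    (f : Op X) (a : A) : Set (Fin f.1 → Set X) :=
  {S | (∀ i, S i ∈ ga a) ∧ refineA al ga f S a < a}

/-- One step of the GPT algorithm: refine by some refiner of some `f ∈ F`. -/
def StepA [Preorder A] (F : Set (Op X)) (al : Set (Set X) → A) (ga : A → Set (Set X))
    (a b : A) : Prop :=
  ∃ f ∈ F, ∃ S : Fin f.1 → Set X, S ∈ refinersA al ga f a ∧ b = refineA al ga f S a

/-- The setoid induced by a collection of sets: `s ≡ t` iff no set of the
collection separates them. -/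
def indSetoid (C : Set (Set X)) : Setoid X :=
  ⟨fun s t => ∀ T ∈ C, (s ∈ T ↔ t ∈ T),
   ⟨fun _ _ _ => Iff.rfl, fun h T hT => (h T hT).symm,
    fun h1 h2 T hT => (h1 T hT).trans (h2 T hT)⟩⟩

/-- The block of `P` containing `s`. -/
def blockOf (P : Setoid X) (s : X) : Set X := {t | P.r s t}

/-- The existential-until operator `EU(S₁, S₂)`. -/
def EUset (r : X → X → Prop) (S1 S2 : Set X) : Set X :=
  S2 ∪ {s | s ∈ S1 ∧ ∃ (n : ℕ) (p : ℕ → X), p 0 = s ∧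
    (∀ i < n, p i ∈ S1 ∧ r (p i) (p (i+1))) ∧ p n ∈ S2}

/-!
By adjunction `b ≤ refine_f(S, a)` holds exactly when `b ≤ a` and `f(S) ∈ γ(b)`. Taking `b = a`,
a tuple `S` in `γ(a)` is a refiner exactly when `f(S) ∉ γ(a)`, so `a` has no refiners if and only
if `γ(a)` is forward `F`-complete. For general `b`, every `b ≤ a` with `γ(b)` forward `F`-complete
stays below each refinement of `a`. Under either condition (i) or (ii), `b = α(S_F(γ(a)))` is such
an element, hence a lower bound of every run from `a`. Conversely, when a run stops at `c`, the
family `γ(c)` is forward `F`-complete and contains `γ(a)`, so it contains `S_F(γ(a))`, which says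
`c ≤ α(S_F(γ(a)))`.
-/

open Relation

section Closure

variable {F : Set (Op X)} {C M : Set (Set X)} {𝓜 : Set (Set (Set X))}

theorem IsMoore.sInter (h𝓜 : ∀ M ∈ 𝓜, IsMoore M) : IsMoore (⋂₀ 𝓜) :=
  fun S hS M hM => h𝓜 M hM S (hS.trans (Set.sInter_subset_of_mem hM))

theorem isMoore_mClose (C : Set (Set X)) : IsMoore (mClose C) :=
  .sInter fun _ hM => hM.1

theorem subset_mClose (C : Set (Set X)) : C ⊆ mClose C :=
  Set.subset_sInter fun _ hM => hM.2

theorem mClose_subset_iff (hM : IsMoore M) : mClose C ⊆ M ↔ C ⊆ M :=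
  ⟨(subset_mClose C).trans, fun hC => Set.sInter_subset_of_mem ⟨hM, hC⟩⟩

theorem imageF_mono (F : Set (Op X)) : Monotone (imageF F) := by
  rintro C M hCM _ ⟨f, hf, S, hS, rfl⟩
  exact ⟨f, hf, S, fun i => hCM (hS i), rfl⟩

theorem FComplete.sInter (h𝓜 : ∀ M ∈ 𝓜, FComplete F M) : FComplete F (⋂₀ 𝓜) :=
  Set.subset_sInter fun M hM => (imageF_mono F (Set.sInter_subset_of_mem hM)).trans (h𝓜 M hM)

theorem isMoore_shellF (F : Set (Op X)) (C : Set (Set X)) : IsMoore (shellF F C) :=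
  .sInter fun _ hM => hM.1

theorem fComplete_shellF (F : Set (Op X)) (C : Set (Set X)) : FComplete F (shellF F C) :=
  .sInter fun _ hM => hM.2.1

theorem subset_shellF (F : Set (Op X)) (C : Set (Set X)) : C ⊆ shellF F C :=
  Set.subset_sInter fun _ hM => hM.2.2

theorem shellF_subset (hM : IsMoore M) (hF : FComplete F M) (hC : C ⊆ M) : shellF F C ⊆ M :=
  Set.sInter_subset_of_mem ⟨hM, hF, hC⟩

end Closure

/-- The pair `(al, ga)` is a Galois insertion of `A` into the dual lattice of Moore families on `X`.
The map `al` is total on collections of subsets, but is constrained only on Moore families. -/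
structure IsMooreInsertion [Preorder A] (al : Set (Set X) → A) (ga : A → Set (Set X)) : Prop where
  isMoore_ga (a : A) : IsMoore (ga a)
  le_al_iff {M : Set (Set X)} (hM : IsMoore M) {a : A} : a ≤ al M ↔ M ⊆ ga a
  al_ga (a : A) : al (ga a) = a

section Refinement

variable [Preorder A] {al : Set (Set X) → A} {ga : A → Set (Set X)} {F : Set (Op X)} {a b c : A}

theorem StepA.lt (hab : StepA F al ga a b) : b < a := by
  obtain ⟨f, -, S, hS, rfl⟩ := hab
  exact hS.2

theorem StepA.le_of_reflTransGen (hab : ReflTransGen (StepA F al ga) a b) : b ≤ a := by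
  induction hab with
  | refl => exact le_rfl
  | tail _ hstep ih => exact hstep.lt.le.trans ih

namespace IsMooreInsertion

variable {C M : Set (Set X)} {f : Op X} {S : Fin f.1 → Set X}

theorem ga_subset_ga_iff (h : IsMooreInsertion al ga) : ga a ⊆ ga b ↔ b ≤ a := by
  rw [← h.le_al_iff (h.isMoore_ga a), h.al_ga]

theorem subset_ga_al (h : IsMooreInsertion al ga) (hM : IsMoore M) : M ⊆ ga (al M) :=
  (h.le_al_iff hM).1 le_rfl

theorem al_le_of_ga_subset (h : IsMooreInsertion al ga) (hM : IsMoore M) (ha : ga a ⊆ M) :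
    al M ≤ a :=
  h.ga_subset_ga_iff.1 (ha.trans (h.subset_ga_al hM))

theorem le_al_mClose_iff (h : IsMooreInsertion al ga) : a ≤ al (mClose C) ↔ C ⊆ ga a := by
  rw [h.le_al_iff (isMoore_mClose C), mClose_subset_iff (h.isMoore_ga a)]

theorem le_refineA_iff (h : IsMooreInsertion al ga) :
    b ≤ refineA al ga f S a ↔ b ≤ a ∧ f.2 S ∈ ga b := by
  rw [refineA, h.le_al_mClose_iff, Set.union_subset_iff, h.ga_subset_ga_iff,
    Set.singleton_subset_iff]

theorem mem_refinersA_iff (h : IsMooreInsertion al ga) :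
    S ∈ refinersA al ga f a ↔ (∀ i, S i ∈ ga a) ∧ f.2 S ∉ ga a := by
  have refine_le : refineA al ga f S a ≤ a := (h.le_refineA_iff.1 le_rfl).1
  have le_refine_iff : a ≤ refineA al ga f S a ↔ f.2 S ∈ ga a := by
    simp only [h.le_refineA_iff, le_refl, true_and]
  rw [refinersA, Set.mem_ofPred_eq, lt_iff_le_not_ge, le_refine_iff, and_iff_right refine_le]

theorem fComplete_ga_of_refinersA_eq_empty (h : IsMooreInsertion al ga)
    (ha : ∀ f ∈ F, refinersA al ga f a = ∅) : FComplete F (ga a) := by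
  rintro _ ⟨f, hf, S, hS, rfl⟩
  by_contra hfS
  exact Set.eq_empty_iff_forall_notMem.1 (ha f hf) S (h.mem_refinersA_iff.2 ⟨hS, hfS⟩)

theorem le_of_stepA (h : IsMooreInsertion al ga) (hc : FComplete F (ga c)) (hca : c ≤ a)
    (hab : StepA F al ga a b) : c ≤ b := by
  obtain ⟨f, hf, S, hS, rfl⟩ := hab
  have S_mem : ∀ i, S i ∈ ga c := fun i => h.ga_subset_ga_iff.2 hca (hS.1 i)
  exact h.le_refineA_iff.2 ⟨hca, hc ⟨f, hf, S, S_mem, rfl⟩⟩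

theorem le_of_reflTransGen_stepA (h : IsMooreInsertion al ga) (hc : FComplete F (ga c))
    (hca : c ≤ a) (hab : ReflTransGen (StepA F al ga) a b) : c ≤ b := by
  induction hab with
  | refl => exact hca
  | tail _ hstep ih => exact h.le_of_stepA hc ih hstep

theorem fComplete_ga_al (h : IsMooreInsertion al ga) (hM : IsMoore M) (hF : FComplete F M)
    (hle : al (mClose (imageF F M)) ≤ al (mClose (imageF F (ga (al M))))) :
    FComplete F (ga (al M)) := by
  have image_subset : imageF F M ⊆ ga (al M) := hF.trans (h.subset_ga_al hM)
  exact h.le_al_mClose_iff.1 ((h.le_al_mClose_iff.2 image_subset).trans hle)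

theorem ga_al_of_mem_range (h : IsMooreInsertion al ga) (hM : M ∈ Set.range ga) :
    ga (al M) = M := by
  obtain ⟨a, rfl⟩ := hM
  rw [h.al_ga]

end IsMooreInsertion

end Refinement

theorem IsMooreInsertion.eq_al_shellF [PartialOrder A] {al : Set (Set X) → A}
    {ga : A → Set (Set X)} (h : IsMooreInsertion al ga) {F : Set (Op X)} {a b : A}
    (hshell : FComplete F (ga (al (shellF F (ga a)))))
    (hab : ReflTransGen (StepA F al ga) a b) (hb : FComplete F (ga b)) :
    b = al (shellF F (ga a)) := by
  have hM : IsMoore (shellF F (ga a)) := isMoore_shellF F (ga a)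
  have ga_subset : ga a ⊆ ga b := h.ga_subset_ga_iff.2 (StepA.le_of_reflTransGen hab)
  apply le_antisymm
  · exact (h.le_al_iff hM).2 (shellF_subset (h.isMoore_ga b) hb ga_subset)
  · exact h.le_of_reflTransGen_stepA hshell (h.al_le_of_ga_subset hM (subset_shellF F _)) hab

theorem stmt0_general [PartialOrder A] (hdcc : ∀ g : ℕ → A, ¬ StrictAnti g)
    {al : Set (Set X) → A} {ga : A → Set (Set X)} (h : IsMooreInsertion al ga)
    (F : Set (Op X)) (a : A) (hshell : FComplete F (ga (al (shellF F (ga a))))) :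
    (¬ ∃ seq : ℕ → A, seq 0 = a ∧ ∀ i : ℕ, StepA F al ga (seq i) (seq (i + 1))) ∧
    (∀ (n : ℕ) (seq : ℕ → A), seq 0 = a →
      (∀ i < n, StepA F al ga (seq i) (seq (i + 1))) →
      (∀ f ∈ F, refinersA al ga f (seq n) = ∅) →
      seq n = al (shellF F (ga a))) := by
  constructor
  · rintro ⟨seq, -, hstep⟩
    exact hdcc seq (strictAnti_nat_of_succ_lt fun i => (hstep i).lt)
  · rintro n seq rfl hstep hend
    have run : ReflTransGen (StepA F al ga) (seq 0) (seq n) :=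
      (reflTransGen_of_succ_of_le (fun i j => StepA F al ga (seq i) (seq j))
        (fun i hi => hstep i hi.2) n.zero_le).lift seq fun _ _ => id
    exact h.eq_al_shellF hshell run (h.fComplete_ga_of_refinersA_eq_empty hend)

theorem stmt0 [CompleteLattice A]
    (hdcc : ∀ g : ℕ → A, ¬ StrictAnti g)
    (al : Set (Set X) → A) (ga : A → Set (Set X))
    (hga : ∀ a : A, IsMoore (ga a))
    (hadj : ∀ M : Set (Set X), IsMoore M → ∀ a : A, a ≤ al M ↔ M ⊆ ga a)
    (hins : ∀ a : A, al (ga a) = a)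
    (F : Set (Op X))
    (hcond : (∀ M : Set (Set X), IsMoore M →
                al (mClose (imageF F M)) = al (mClose (imageF F (ga (al M))))) ∨
             (∀ a : A, shellF F (ga a) ∈ Set.range ga))
    (a : A) :
    (¬ ∃ seq : ℕ → A, seq 0 = a ∧ ∀ i : ℕ, StepA F al ga (seq i) (seq (i + 1))) ∧
    (∀ (n : ℕ) (seq : ℕ → A), seq 0 = a →
      (∀ i < n, StepA F al ga (seq i) (seq (i + 1))) →
      (∀ f ∈ F, refinersA al ga f (seq n) = ∅) →
      seq n = al (shellF F (ga a))) := by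
  have h : IsMooreInsertion al ga := ⟨hga, fun hM => hadj _ hM _, hins⟩
  refine stmt0_general hdcc h F a ?_
  rcases hcond with hcomm | hrange
  · exact h.fComplete_ga_al (isMoore_shellF F _) (fComplete_shellF F _)
      (hcomm _ (isMoore_shellF F _)).le
  · rw [h.ga_al_of_mem_range (hrange a)]
    exact fComplete_shellF F _
end

section
/- Let Σ be a set, → a binary relation on Σ, and P a partition of Σ. The following are equivalent: (1) P is PT stable, i.e. for all blocks B, B' ∈ P, either B ⊆ pre_→(B') or B ∩ pre_→(B') = ∅; (2) for every P-saturated set S ⊆ Σ, pre_→(S) is P-saturated (i.e. pad(P) is forward complete for pre_→); (3) for every P-saturated set S, split(pre_→(S), P) = P. Moreover, for any P-saturated S, split(pre_→(S), P) ≠ P if and only if pre_→(S) is not P-saturated. -/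
universe u v

variable {X : Type u} {A : Type v}

/-!
Every saturated set is the union of the blocks of its points and `preR r` commutes with unions, so
preservation of saturation by `preR r` need only be tested on blocks. Stability is that test, since
a set is saturated precisely when it contains or misses each block, and these are also the sets that
split no block.
-/

section Saturated

variable {P : Setoid X} {S : Set X}

theorem blockOf_mem_padS (P : Setoid X) (s : X) : blockOf P s ∈ padS P :=
  fun _ hst _ htu => P.trans' hst htu

theorem biUnion_blockOf (hS : S ∈ padS P) : ⋃ s ∈ S, blockOf P s = S :=
  Set.Subset.antisymm (Set.iUnion₂_subset hS)
    fun s hs => Set.mem_biUnion hs (P.refl' s)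

theorem iUnion_mem_padS {ι : Sort*} {F : ι → Set X} (hF : ∀ i, F i ∈ padS P) :
    ⋃ i, F i ∈ padS P := by
  intro s hs t hst
  obtain ⟨i, hi⟩ := Set.mem_iUnion.mp hs
  exact Set.mem_iUnion.mpr ⟨i, hF i s hi t hst⟩

theorem mem_padS_iff_blockOf_subset_or_inter_eq_empty :
    S ∈ padS P ↔ ∀ s, blockOf P s ⊆ S ∨ blockOf P s ∩ S = ∅ := by
  constructor
  · intro hS s
    refine (Set.eq_empty_or_nonempty (blockOf P s ∩ S)).symm.imp_left ?_
    rintro ⟨t, hst, ht⟩ u hsu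
    exact hS t ht u (P.trans' (P.symm' hst) hsu)
  · intro h s hs
    have hmeet : (blockOf P s ∩ S).Nonempty := ⟨s, P.refl' s, hs⟩
    exact (h s).resolve_right hmeet.ne_empty

theorem splitS_eq_self_iff : splitS S P = P ↔ S ∈ padS P := by
  constructor
  · intro h s hs t hst
    have hsplit : (splitS S P).r s t := h.symm ▸ hst
    exact hsplit.2.mp hs
  · intro hS
    refine Setoid.ext fun s t => ⟨And.left, fun hst => ⟨hst, ?_⟩⟩
    exact ⟨fun hs => hS s hs t hst, fun ht => hS t ht s (P.symm' hst)⟩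

end Saturated

theorem preR_iUnion (r : X → X → Prop) {ι : Sort*} (F : ι → Set X) :
    preR r (⋃ i, F i) = ⋃ i, preR r (F i) :=
  SetRel.preimage_iUnion {p | r p.1 p.2} F

theorem forall_preR_mem_padS_iff (r : X → X → Prop) (P Q : Setoid X) :
    (∀ S ∈ padS Q, preR r S ∈ padS P) ↔ ∀ t, preR r (blockOf Q t) ∈ padS P := by
  refine ⟨fun h t => h _ (blockOf_mem_padS Q t), fun h S hS => ?_⟩
  rw [← biUnion_blockOf hS]
  simp only [preR_iUnion]
  exact iUnion_mem_padS fun t => iUnion_mem_padS fun _ => h t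

theorem stmt5 (r : X → X → Prop) (P : Setoid X) :
    ((∀ s t : X, blockOf P s ⊆ preR r (blockOf P t) ∨
        blockOf P s ∩ preR r (blockOf P t) = ∅) ↔
      (∀ S ∈ padS P, preR r S ∈ padS P)) ∧
    ((∀ S ∈ padS P, preR r S ∈ padS P) ↔
      (∀ S ∈ padS P, splitS (preR r S) P = P)) ∧
    (∀ S ∈ padS P, (splitS (preR r S) P ≠ P ↔ preR r S ∉ padS P)) := by
  refine ⟨?_, ?_, ?_⟩
  · rw [forall_preR_mem_padS_iff, forall_comm]
    exact forall_congr' fun _ => mem_padS_iff_blockOf_subset_or_inter_eq_empty.symm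
  · exact forall₂_congr fun _ _ => splitS_eq_self_iff.symm
  · exact fun _ _ => splitS_eq_self_iff.not
end

section
/- Let Σ be a set, → a binary relation on Σ, and P a partition of Σ. If for all blocks B₁, B₂ ∈ P the set EU(B₁, B₂) is P-saturated, then for all P-saturated sets S₁, S₂ ⊆ Σ, the set EU(S₁, S₂) is P-saturated. -/
universe u v

variable {X : Type u} {A : Type v}

/-! `EU(S₁, S₂)` is the least set that contains `S₂` and every state of `S₁` with a successor in it.
The hypothesis lifts a step `s → t` to blocks: every element of the block of `s` reaches the block
of `t` by a path that stays in the block of `s` until then. Hence the set of states whose whole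
block lies in `EU(S₁, S₂)` contains `S₂` and every state of `S₁` with a successor in it, so by
leastness it contains `EU(S₁, S₂)`. The same argument works for any preorder, with principal upper
sets in place of blocks and upper sets in place of saturated sets. -/

section ExistentialUntil

variable {r : X → X → Prop} {S1 S2 S1' S2' T : Set X} {s : X}

theorem mem_EUset_iff_exists_path :
    s ∈ EUset r S1 S2 ↔ ∃ (n : ℕ) (p : ℕ → X), p 0 = s ∧
      (∀ i < n, p i ∈ S1 ∧ r (p i) (p (i + 1))) ∧ p n ∈ S2 := by
  constructor
  · rintro (hs | ⟨-, hpath⟩)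
    · exact ⟨0, fun _ => s, rfl, by simp, hs⟩
    · exact hpath
  · rintro ⟨n, p, rfl, hp, hn⟩
    rcases n.eq_zero_or_pos with rfl | hpos
    · exact Or.inl hn
    · exact Or.inr ⟨(hp 0 hpos).1, n, p, rfl, hp, hn⟩

theorem right_subset_EUset : S2 ⊆ EUset r S1 S2 :=
  Set.subset_union_left

theorem inter_preR_EUset_subset : S1 ∩ preR r (EUset r S1 S2) ⊆ EUset r S1 S2 := by
  rintro s ⟨hs, t, ht, hst⟩
  obtain ⟨n, p, rfl, hp, hn⟩ := mem_EUset_iff_exists_path.1 ht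
  refine mem_EUset_iff_exists_path.2 ⟨n + 1, fun i => i.casesOn s p, rfl, ?_, hn⟩
  rintro (_ | i) hi
  · exact ⟨hs, hst⟩
  · exact hp i (Nat.succ_lt_succ_iff.1 hi)

theorem EUset_subset (hS2 : S2 ⊆ T) (hT : S1 ∩ preR r T ⊆ T) : EUset r S1 S2 ⊆ T := by
  intro s hs
  obtain ⟨n, p, rfl, hp, hn⟩ := mem_EUset_iff_exists_path.1 hs
  exact Nat.decreasingInduction (motive := fun k _ => p k ∈ T)
    (fun k hk ih => hT ⟨(hp k hk).1, p (k + 1), ih, (hp k hk).2⟩) (hS2 hn) n.zero_le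

theorem EUset_subset_EUset (hS1 : S1 ⊆ S1') (hS2 : S2 ⊆ EUset r S1' S2') :
    EUset r S1 S2 ⊆ EUset r S1' S2' :=
  EUset_subset hS2 ((Set.inter_subset_inter_left _ hS1).trans inter_preR_EUset_subset)

end ExistentialUntil

theorem stmt9_general [Preorder X] {r : X → X → Prop}
    (h : ∀ a b : X, IsUpperSet (EUset r (Set.Ici a) (Set.Ici b)))
    {S1 S2 : Set X} (hS1 : IsUpperSet S1) (hS2 : IsUpperSet S2) :
    IsUpperSet (EUset r S1 S2) := by
  suffices hsub : EUset r S1 S2 ⊆ {s | Set.Ici s ⊆ EUset r S1 S2} from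
    isUpperSet_iff_Ici_subset.2 hsub
  refine EUset_subset (fun s hs => (hS2.Ici_subset hs).trans right_subset_EUset) ?_
  rintro s ⟨hs, t, ht, hst⟩
  have hs_mem : s ∈ EUset r (Set.Ici s) (Set.Ici t) :=
    inter_preR_EUset_subset ⟨Set.self_mem_Ici, t, right_subset_EUset Set.self_mem_Ici, hst⟩
  calc Set.Ici s ⊆ EUset r (Set.Ici s) (Set.Ici t) := (h s t).Ici_subset hs_mem
    _ ⊆ EUset r S1 S2 := EUset_subset_EUset (hS1.Ici_subset hs) ht

/-- The equivalence relation `P` regarded as a preorder, so that its blocks are the principal upper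
sets and its saturated sets are the upper sets. The arguments are swapped to match the blocks
`{x | P x a}` of `Setoid.classes`. -/
abbrev setoidPreorder (P : Setoid X) : Preorder X where
  le a b := P b a
  le_refl := P.refl
  le_trans _ _ _ hab hbc := P.trans hbc hab

theorem mem_padS_iff_isUpperSet {P : Setoid X} {S : Set X} :
    S ∈ padS P ↔ letI := setoidPreorder P; IsUpperSet S :=
  ⟨fun hS a b hab ha => hS a ha b (P.symm hab), fun hS _ ha _ hab => hS (P.symm hab) ha⟩

theorem stmt9 (r : X → X → Prop) (P : Setoid X)
    (h : ∀ B1 ∈ P.classes, ∀ B2 ∈ P.classes, EUset r B1 B2 ∈ padS P) :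
    ∀ S1 ∈ padS P, ∀ S2 ∈ padS P, EUset r S1 S2 ∈ padS P := by
  let := setoidPreorder P
  simp only [mem_padS_iff_isUpperSet] at h ⊢
  exact fun _ hS1 _ hS2 => stmt9_general (fun a b => h _ ⟨a, rfl⟩ _ ⟨b, rfl⟩) hS1 hS2
end

section
/- Let Σ be a set and 𝒜 a disjunctive Moore family on Σ with associated closure μ. Then for every S ⊆ Σ: μ(S) = ⋃{B ∈ pr(𝒜) : there exists C ∈ pr(𝒜) with C ∩ S ≠ ∅ and μ(B) ⊆ μ(C)}. -/
universe u v

variable {X : Type u} {A : Type v}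

/-!
If `M` is closed under unions, then `μ S = ⋃ s ∈ S, μ {s}`: for `x` outside every `μ {s}`, the union
of all members of `M` that miss `x` is a member of `M` that contains `S` and still misses `x`.
Moreover a block `B` of `pr(M)` has the same closure as any of its points, so for `b ∈ B` and
`c ∈ C` the condition `μ B ⊆ μ C` just says `b ∈ μ {c}`.
-/

section Closure

variable {M : Set (Set X)} {B C S T : Set X} {b c x : X}

theorem mem_mu : x ∈ mu M S ↔ ∀ T ∈ M, S ⊆ T → x ∈ T := by
  simp only [mu, Set.mem_sInter, Set.mem_ofPred_eq, and_imp]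

theorem subset_mu : S ⊆ mu M S := Set.subset_sInter fun _ hT => hT.2

theorem mem_mu_singleton_self (M : Set (Set X)) (x : X) : x ∈ mu M {x} :=
  subset_mu (Set.mem_singleton x)

theorem mu_subset_mu_iff : mu M S ⊆ mu M T ↔ S ⊆ mu M T where
  mp h := subset_mu.trans h
  mpr h _ hx := mem_mu.2 fun U hU hTU =>
    mem_mu.1 hx U hU (h.trans (Set.sInter_subset_of_mem ⟨hU, hTU⟩))

theorem mu_mono (h : S ⊆ T) : mu M S ⊆ mu M T :=
  mu_subset_mu_iff.2 (h.trans subset_mu)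

theorem mu_eq_biUnion_mu_singleton (hM : ∀ 𝒰 ⊆ M, ⋃₀ 𝒰 ∈ M) (S : Set X) :
    mu M S = ⋃ s ∈ S, mu M {s} := by
  refine Set.Subset.antisymm (fun x hx => ?_)
    (Set.iUnion₂_subset fun s hs => mu_mono (Set.singleton_subset_iff.2 hs))
  by_contra hxS
  have separate : ∀ s ∈ S, ∃ T ∈ M, s ∈ T ∧ x ∉ T := by
    simpa [mem_mu] using hxS
  have cover : S ⊆ ⋃₀ {T ∈ M | x ∉ T} := fun s hs =>
    have ⟨T, hT, hsT, hxT⟩ := separate s hs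
    ⟨T, ⟨hT, hxT⟩, hsT⟩
  obtain ⟨T, ⟨-, hxT⟩, hxT'⟩ := mem_mu.1 hx _ (hM _ (Set.sep_subset M _)) cover
  exact hxT hxT'

theorem mu_eq_mu_singleton_of_mem_classes (hC : C ∈ (prS M).classes) (hc : c ∈ C) :
    mu M C = mu M {c} := by
  refine Set.Subset.antisymm (mu_subset_mu_iff.2 fun d hd => ?_)
    (mu_mono (Set.singleton_subset_iff.2 hc))
  have hdc : mu M {d} = mu M {c} := (prS M).rel_iff_exists_classes.2 ⟨C, hC, hd, hc⟩
  exact hdc ▸ mem_mu_singleton_self M d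

theorem mu_subset_mu_iff_of_mem_classes (hB : B ∈ (prS M).classes) (hb : b ∈ B)
    (hC : C ∈ (prS M).classes) (hc : c ∈ C) : mu M B ⊆ mu M C ↔ b ∈ mu M {c} := by
  rw [mu_eq_mu_singleton_of_mem_classes hB hb, mu_eq_mu_singleton_of_mem_classes hC hc,
    mu_subset_mu_iff, Set.singleton_subset_iff]

theorem biUnion_mu_singleton_eq_sUnion_classes (M : Set (Set X)) (S : Set X) :
    ⋃ s ∈ S, mu M {s} = ⋃₀ {B | B ∈ (prS M).classes ∧
      ∃ C ∈ (prS M).classes, (C ∩ S).Nonempty ∧ mu M B ⊆ mu M C} := by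
  have exists_class (x : X) : ∃ B ∈ (prS M).classes, x ∈ B :=
    ⟨_, (prS M).mem_classes x, (prS M).refl x⟩
  refine Set.Subset.antisymm (Set.iUnion₂_subset fun s hs x hx => ?_) ?_
  · obtain ⟨B, hB, hxB⟩ := exists_class x
    obtain ⟨C, hC, hsC⟩ := exists_class s
    exact ⟨B, ⟨hB, C, hC, ⟨s, hsC, hs⟩, (mu_subset_mu_iff_of_mem_classes hB hxB hC hsC).2 hx⟩, hxB⟩
  · rintro x ⟨B, ⟨hB, C, hC, ⟨s, hsC, hs⟩, hBC⟩, hxB⟩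
    exact Set.mem_biUnion hs ((mu_subset_mu_iff_of_mem_classes hB hxB hC hsC).1 hBC)

end Closure

theorem stmt10_general (M : Set (Set X)) (hM : ∀ 𝒰 ⊆ M, ⋃₀ 𝒰 ∈ M) (S : Set X) :
    mu M S = ⋃₀ {B | B ∈ (prS M).classes ∧
      ∃ C ∈ (prS M).classes, (C ∩ S).Nonempty ∧ mu M B ⊆ mu M C} :=
  (mu_eq_biUnion_mu_singleton hM S).trans (biUnion_mu_singleton_eq_sUnion_classes M S)

theorem stmt10 (M : Set (Set X)) (hM : IsDisjMoore M) (S : Set X) :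
    mu M S = ⋃₀ {B | B ∈ (prS M).classes ∧
      ∃ C ∈ (prS M).classes, (C ∩ S).Nonempty ∧ mu M B ⊆ mu M C} :=
  stmt10_general M hM.2 S
end

section
/- Let Σ be a set, 𝒜 a disjunctive Moore family on Σ, S ⊆ Σ, and 𝒜' = D(𝒜 ∪ {S}) the least disjunctive Moore family containing 𝒜 and S. Then pr(𝒜') = split(S, pr(𝒜)), i.e. the partition induced by 𝒜' is obtained from the partition induced by 𝒜 by replacing each block B with the nonempty sets among B ∩ S and B ∖ S. -/
universe u v

variable {X : Type u} {A : Type v}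

theorem mem_mu_singleton {C : Set (Set X)} {s x : X} :
    x ∈ mu C {s} ↔ ∀ T ∈ C, s ∈ T → x ∈ T := by
  simp only [mu, Set.mem_sInter, Set.mem_ofPred_eq, Set.singleton_subset_iff, and_imp]

theorem prS_eq_indSetoid (C : Set (Set X)) : prS C = indSetoid C := by
  ext s t
  change mu C {s} = mu C {t} ↔ ∀ T ∈ C, (s ∈ T ↔ t ∈ T)
  constructor
  · intro h T hT
    have hs : s ∈ mu C {t} := h ▸ mem_mu_singleton.2 fun _ _ hsT => hsT
    have ht : t ∈ mu C {s} := h ▸ mem_mu_singleton.2 fun _ _ htT => htT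
    exact ⟨mem_mu_singleton.1 ht T hT, mem_mu_singleton.1 hs T hT⟩
  · intro h
    ext x
    simp only [mem_mu_singleton]
    exact forall₂_congr fun T hT => imp_congr_left (h T hT)

theorem isDisjMoore_padS (P : Setoid X) : IsDisjMoore (padS P) :=
  ⟨fun _ hC s hs t hst T hT => hC hT s (hs T hT) t hst,
    fun _ hC s ⟨T, hT, hsT⟩ t hst => ⟨T, hT, hC hT s hsT t hst⟩⟩

theorem subset_dClose (C : Set (Set X)) : C ⊆ dClose C :=
  Set.subset_sInter fun _ hM => hM.2

theorem IsDisjMoore.dClose_subset_iff {C M : Set (Set X)} (hM : IsDisjMoore M) :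
    dClose C ⊆ M ↔ C ⊆ M :=
  ⟨(subset_dClose C).trans, fun hCM => Set.sInter_subset_of_mem ⟨hM, hCM⟩⟩

theorem le_indSetoid_iff_subset_padS {P : Setoid X} {C : Set (Set X)} :
    P ≤ indSetoid C ↔ C ⊆ padS P :=
  ⟨fun h T hT _ hs _ hst => (h hst T hT).1 hs,
    fun h s t hst _ hT => ⟨fun hs => h hT s hs t hst, fun ht => h hT t ht s (P.symm hst)⟩⟩

-- The two setoids are compared through the setoids `P` below them, because each `padS P` is itself
-- a disjunctive Moore family and hence contains `dClose C` as soon as it contains `C`.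
theorem indSetoid_dClose (C : Set (Set X)) : indSetoid (dClose C) = indSetoid C :=
  eq_of_forall_le_iff fun P => calc
    P ≤ indSetoid (dClose C) ↔ dClose C ⊆ padS P := le_indSetoid_iff_subset_padS
    _ ↔ C ⊆ padS P := (isDisjMoore_padS P).dClose_subset_iff
    _ ↔ P ≤ indSetoid C := le_indSetoid_iff_subset_padS.symm

theorem indSetoid_union_singleton (C : Set (Set X)) (S : Set X) :
    indSetoid (C ∪ {S}) = splitS S (indSetoid C) := by
  ext s t
  change (∀ T ∈ C ∪ {S}, (s ∈ T ↔ t ∈ T)) ↔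
    (∀ T ∈ C, (s ∈ T ↔ t ∈ T)) ∧ (s ∈ S ↔ t ∈ S)
  simp only [Set.mem_union, Set.mem_singleton_iff, or_imp, forall_and, forall_eq]

theorem stmt11_general (C : Set (Set X)) (S : Set X) :
    prS (dClose (C ∪ {S})) = splitS S (prS C) := by
  rw [prS_eq_indSetoid, prS_eq_indSetoid, indSetoid_dClose, indSetoid_union_singleton]

theorem stmt11 (M : Set (Set X)) (hM : IsDisjMoore M) (S : Set X) :
    prS (dClose (M ∪ {S})) = splitS S (prS M) :=
  stmt11_general M S
end

section
/- Let Σ be a set and 𝒜 a Moore family on Σ. For every s ∈ Σ, the least member of D(𝒜) containing s equals the least member of 𝒜 containing s; consequently pr(D(𝒜)) = pr(𝒜), i.e. a Moore family and its disjunctive completion induce the same partition of Σ. -/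
universe u v

variable {X : Type u} {A : Type v}

/-!
Call a set stable if it contains, with each of its points `s`, the whole of `μ({s})`. Every member
of the family is stable, and stability is a pointwise condition, so it passes to unions as well as
to intersections. Hence every member of the disjunctive completion is stable: completing adds no set
that contains `s` without containing all of `μ({s})`.
-/

/-- The sets stable under `f`: those that contain, with each of their points `s`, all of `f s`.
With `f s = μ({s})` they bound the disjunctive completion from above. -/
def stableSets (f : X → Set X) : Set (Set X) := {T | ∀ s ∈ T, f s ⊆ T}

theorem isDisjMoore_stableSets (f : X → Set X) : IsDisjMoore (stableSets f) := by
  constructor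
  · intro S hS s hs
    exact Set.subset_sInter fun T hT => hS hT s (hs T hT)
  · rintro S hS s ⟨T, hT, hsT⟩
    exact Set.subset_sUnion_of_subset S T (hS hT s hsT) hT

theorem dClose_subset {C N : Set (Set X)} (hN : IsDisjMoore N) (hCN : C ⊆ N) : dClose C ⊆ N :=
  Set.sInter_subset_of_mem ⟨hN, hCN⟩

theorem mu_subset {C : Set (Set X)} {S T : Set X} (hT : T ∈ C) (hST : S ⊆ T) : mu C S ⊆ T :=
  Set.sInter_subset_of_mem ⟨hT, hST⟩

theorem mu_subset_mu_of_subset {C D : Set (Set X)} (hCD : C ⊆ D) (S : Set X) :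
    mu D S ⊆ mu C S :=
  Set.subset_sInter fun _ hT => mu_subset (hCD hT.1) hT.2

theorem subset_stableSets_mu_singleton (C : Set (Set X)) : C ⊆ stableSets fun s => mu C {s} :=
  fun _ hT _ hs => mu_subset hT (Set.singleton_subset_iff.2 hs)

theorem dClose_subset_stableSets_mu_singleton (C : Set (Set X)) :
    dClose C ⊆ stableSets fun s => mu C {s} :=
  dClose_subset (isDisjMoore_stableSets _) (subset_stableSets_mu_singleton C)

theorem mu_dClose_singleton (C : Set (Set X)) (s : X) : mu (dClose C) {s} = mu C {s} := by
  apply Set.Subset.antisymm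
  · exact mu_subset_mu_of_subset (subset_dClose C) {s}
  · refine Set.subset_sInter fun T ⟨hT, hsT⟩ => ?_
    exact dClose_subset_stableSets_mu_singleton C hT s (Set.singleton_subset_iff.1 hsT)

theorem prS_eq_ker (C : Set (Set X)) : prS C = Setoid.ker fun s => mu C {s} := rfl

theorem prS_congr {C D : Set (Set X)} (h : ∀ s, mu C {s} = mu D {s}) : prS C = prS D := by
  rw [prS_eq_ker, prS_eq_ker, funext h]

theorem stmt18_general (C : Set (Set X)) :
    (∀ s : X, mu (dClose C) {s} = mu C {s}) ∧ prS (dClose C) = prS C :=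
  ⟨mu_dClose_singleton C, prS_congr (mu_dClose_singleton C)⟩

theorem stmt18 (M : Set (Set X)) (hM : IsMoore M) :
    (∀ s : X, mu (dClose M) {s} = mu M {s}) ∧ prS (dClose M) = prS M :=
  stmt18_general M
end
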